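/- Under the condition λ₁ ≤ ρ_q < (λ₁+λ₂)/2, the matrix B − ρ_q I is symmetric positive definite, and the set Y is the closed ball in the (B − ρ_q I)-inner product with center −z and radius (zᵀ(B − ρ_q I)z)^{1/2}, where z = (B − ρ_q I)⁻¹b; explicitly, Y = {y ∈ ℝ^{n−1} : (y+z)ᵀ(B − ρ_q I)(y+z) ≤ zᵀ(B − ρ_q I)z}. In particular, Y is a convex set. -/

import Mathlib

open Matrix

noncomputable def Mnorm {n : ℕ} (M : Matrix (Fin n) (Fin n) ℝ) (x : Fin n → ℝ) : ℝ :=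
  Real.sqrt (x ⬝ᵥ (M *ᵥ x))

noncomputable def Rq {n : ℕ} (A M : Matrix (Fin n) (Fin n) ℝ) (x : Fin n → ℝ) : ℝ :=
  (x ⬝ᵥ (A *ᵥ x)) / (x ⬝ᵥ (M *ᵥ x))

/-- ψ(x) = QᵀMx / (qᵀMx) -/
noncomputable def psiMap {n m : ℕ} (M : Matrix (Fin n) (Fin n) ℝ) (q : Fin n → ℝ)
    (Q : Matrix (Fin n) (Fin m) ℝ) (x : Fin n → ℝ) : Fin m → ℝ :=
  (q ⬝ᵥ (M *ᵥ x))⁻¹ • ((Qᵀ * M) *ᵥ x)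

/-- ψ†(y) = (Qy + q)/‖Qy + q‖_M -/
noncomputable def psiDag {n m : ℕ} (M : Matrix (Fin n) (Fin n) ℝ) (q : Fin n → ℝ)
    (Q : Matrix (Fin n) (Fin m) ℝ) (y : Fin m → ℝ) : Fin n → ℝ :=
  (Mnorm M (Q *ᵥ y + q))⁻¹ • (Q *ᵥ y + q)

/-- The hemisphere S₊ = {x : ‖x‖_M = 1, qᵀMx > 0}. -/
def Splus {n : ℕ} (M : Matrix (Fin n) (Fin n) ℝ) (q : Fin n → ℝ) : Set (Fin n → ℝ) :=
  {x | Mnorm M x = 1 ∧ 0 < q ⬝ᵥ (M *ᵥ x)}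

/-- X = {x ∈ S₊ : Rq(x) ≤ Rq(q)}. -/
def Xset {n : ℕ} (A M : Matrix (Fin n) (Fin n) ℝ) (q : Fin n → ℝ) : Set (Fin n → ℝ) :=
  {x | x ∈ Splus M q ∧ Rq A M x ≤ Rq A M q}

/-- φ(y) = (yᵀBy + 2yᵀb + ρ)/(yᵀy + 1). -/
noncomputable def phiAux {m : ℕ} (B : Matrix (Fin m) (Fin m) ℝ) (b : Fin m → ℝ) (ρ : ℝ)
    (y : Fin m → ℝ) : ℝ :=
  (y ⬝ᵥ (B *ᵥ y) + 2 * (y ⬝ᵥ b) + ρ) / (y ⬝ᵥ y + 1)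

theorem aux_symm {m : ℕ} {M : Matrix (Fin m) (Fin m) ℝ} (hM : Mᵀ = M) (x y : Fin m → ℝ) :
    x ⬝ᵥ (M *ᵥ y) = y ⬝ᵥ (M *ᵥ x) := by
  conv_rhs => rw [← hM, mulVec_transpose, dotProduct_comm, ← dotProduct_mulVec]

theorem aux_move {m k : ℕ} (A : Matrix (Fin m) (Fin m) ℝ) (Q : Matrix (Fin m) (Fin k) ℝ)
    (y : Fin k → ℝ) (x : Fin m → ℝ) :
    (Q *ᵥ y) ⬝ᵥ (A *ᵥ x) = y ⬝ᵥ ((Qᵀ * A) *ᵥ x) := by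
  rw [← mulVec_mulVec, dotProduct_mulVec y, vecMul_transpose]

theorem aux_quad {m : ℕ} {M : Matrix (Fin m) (Fin m) ℝ} (hM : Mᵀ = M) (x y : Fin m → ℝ)
    (a c : ℝ) :
    (a • x + c • y) ⬝ᵥ (M *ᵥ (a • x + c • y)) =
      a ^ 2 * (x ⬝ᵥ (M *ᵥ x)) + 2 * a * c * (x ⬝ᵥ (M *ᵥ y)) + c ^ 2 * (y ⬝ᵥ (M *ᵥ y)) := by
  simp only [mulVec_add, mulVec_smul, add_dotProduct, dotProduct_add, smul_dotProduct,
    dotProduct_smul, smul_eq_mul]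
  rw [aux_symm hM y x]
  ring

theorem aux_add {m : ℕ} {M : Matrix (Fin m) (Fin m) ℝ} (hM : Mᵀ = M) (x y : Fin m → ℝ) :
    (x + y) ⬝ᵥ (M *ᵥ (x + y)) =
      x ⬝ᵥ (M *ᵥ x) + 2 * (x ⬝ᵥ (M *ᵥ y)) + y ⬝ᵥ (M *ᵥ y) := by
  simpa using aux_quad hM x y 1 1

theorem aux_tr {m : ℕ} {M : Matrix (Fin m) (Fin m) ℝ} (hM : M.PosDef) : Mᵀ = M := by
  have := hM.isHermitian.eq
  rwa [conjTranspose_eq_transpose_of_trivial] at this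

theorem aux_nonneg {m : ℕ} {M : Matrix (Fin m) (Fin m) ℝ} (hM : M.PosDef) (x : Fin m → ℝ) :
    0 ≤ x ⬝ᵥ (M *ᵥ x) := by
  simpa using hM.posSemidef.dotProduct_mulVec_nonneg x

theorem aux_convex {m : ℕ} {C : Matrix (Fin m) (Fin m) ℝ} (hC : C.PosDef) (z : Fin m → ℝ)
    (r : ℝ) : Convex ℝ {y : Fin m → ℝ | (y + z) ⬝ᵥ (C *ᵥ (y + z)) ≤ r} := by
  intro x hx y hy a c ha hc hac
  simp only [Set.mem_ofPred_eq] at hx hy ⊢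
  have e : a • x + c • y + z = a • (x + z) + c • (y + z) := by
    have : z = (a + c) • z := by rw [hac, one_smul]
    conv_lhs => rw [this]
    module
  rw [e, aux_quad (aux_tr hC)]
  have h := aux_nonneg hC ((1:ℝ) • (x + z) + (-1:ℝ) • (y + z))
  rw [aux_quad (aux_tr hC)] at h
  obtain rfl : c = 1 - a := by linarith
  nlinarith [mul_nonneg ha hc, mul_nonneg (mul_nonneg ha hc) h, mul_le_mul_of_nonneg_left hx ha,
    mul_le_mul_of_nonneg_left hy hc]

/-- The spectral lower bound for the quadratic form. -/
theorem aux_spec {n : ℕ} (A M : Matrix (Fin (n+2)) (Fin (n+2)) ℝ)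
    (hM : Mᵀ = M)
    (lam : Fin (n+2) → ℝ) (u : Fin (n+2) → Fin (n+2) → ℝ) (hmono : Monotone lam)
    (heig : ∀ i, A *ᵥ u i = lam i • (M *ᵥ u i))
    (horth : ∀ i j, u i ⬝ᵥ (M *ᵥ u j) = if i = j then (1:ℝ) else 0)
    (x : Fin (n+2) → ℝ) :
    lam 1 * (x ⬝ᵥ (M *ᵥ x)) - (lam 1 - lam 0) * (x ⬝ᵥ (M *ᵥ u 0)) ^ 2 ≤ x ⬝ᵥ (A *ᵥ x) := by
  set U : Matrix (Fin (n+2)) (Fin (n+2)) ℝ := Matrix.of u with hU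
  have h1 : U * (M * Uᵀ) = 1 := by
    ext i j
    have := horth i j
    rw [one_apply, ← this, mul_apply']
    rfl
  have h2 : (M * Uᵀ) * U = 1 := mul_eq_one_comm.mp h1
  set c : Fin (n+2) → ℝ := x ᵥ* (M * Uᵀ) with hc
  have hx : x = c ᵥ* U := by rw [hc, vecMul_vecMul, h2, vecMul_one]
  have hci : ∀ i, c i = x ⬝ᵥ (M *ᵥ u i) := by
    intro i
    rfl
  have hx' : x = ∑ i, c i • u i := by
    conv_lhs => rw [hx]
    rw [vecMul_eq_sum]
    rfl
  have hMx : x ⬝ᵥ (M *ᵥ x) = ∑ i, c i ^ 2 := by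
    have : M *ᵥ x = ∑ i, c i • (M *ᵥ u i) := by
      conv_lhs => rw [hx']
      simp [mulVec_sum, mulVec_smul]
    rw [this, dotProduct_sum]
    simp [← hci, sq]
  have hAx : x ⬝ᵥ (A *ᵥ x) = ∑ i, lam i * c i ^ 2 := by
    have : A *ᵥ x = ∑ i, c i • (lam i • (M *ᵥ u i)) := by
      conv_lhs => rw [hx']
      simp [mulVec_sum, mulVec_smul, heig]
    rw [this, dotProduct_sum]
    refine Finset.sum_congr rfl fun i _ => ?_
    simp only [dotProduct_smul, smul_eq_mul, ← hci]
    ring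
  rw [hMx, hAx, ← hci, Fin.sum_univ_succ, Fin.sum_univ_succ (fun i => lam i * c i ^ 2), mul_add,
    Finset.mul_sum]
  have : ∑ i : Fin (n+1), lam 1 * c i.succ ^ 2 ≤ ∑ i : Fin (n+1), lam i.succ * c i.succ ^ 2 := by
    refine Finset.sum_le_sum fun i _ => ?_
    refine mul_le_mul_of_nonneg_right (hmono ?_) (sq_nonneg _)
    rw [← Fin.succ_zero_eq_one]
    exact Fin.succ_le_succ_iff.mpr (Fin.zero_le _)
  linarith

theorem aux_bessel {m : ℕ} {M : Matrix (Fin m) (Fin m) ℝ} (hM : M.PosDef)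
    (q w v : Fin m → ℝ) (hq : q ⬝ᵥ (M *ᵥ q) = 1) (hv : v ⬝ᵥ (M *ᵥ v) = 1)
    (hwq : w ⬝ᵥ (M *ᵥ q) = 0) (hw : 0 < w ⬝ᵥ (M *ᵥ w)) :
    (w ⬝ᵥ (M *ᵥ v)) ^ 2 ≤ (w ⬝ᵥ (M *ᵥ w)) * (1 - (q ⬝ᵥ (M *ᵥ v)) ^ 2) := by
  have hs := aux_tr hM
  have h := aux_nonneg hM ((w ⬝ᵥ (M *ᵥ w)) • ((1:ℝ) • v + (-(q ⬝ᵥ (M *ᵥ v))) • q)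
    + (-(w ⬝ᵥ (M *ᵥ v))) • w)
  rw [aux_quad hs, aux_quad hs, aux_symm hs (_ + _) w] at h
  simp only [mulVec_add, mulVec_smul, dotProduct_add, dotProduct_smul, smul_eq_mul, hwq, hq, hv] at h
  rw [aux_symm hs v q] at h
  refine le_of_mul_le_mul_left ?_ hw
  nlinarith

theorem aux_complete {n : ℕ} (M : Matrix (Fin (n+2)) (Fin (n+2)) ℝ) (hM : Mᵀ = M)
    (q : Fin (n+2) → ℝ) (Q : Matrix (Fin (n+2)) (Fin (n+1)) ℝ)
    (hq1 : q ⬝ᵥ (M *ᵥ q) = 1) (hQMQ : Qᵀ * M * Q = 1) (hQMq : (Qᵀ * M) *ᵥ q = 0)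
    (x : Fin (n+2) → ℝ) :
    x = Q *ᵥ ((Qᵀ * M) *ᵥ x) + (q ⬝ᵥ (M *ᵥ x)) • q := by
  set W : Matrix (Fin (n+2)) (Fin (n+1) ⊕ Unit) ℝ := fromCols Q (replicateCol Unit q) with hW
  have h1 : (Wᵀ * M) * W = 1 := by
    rw [hW, transpose_fromCols, fromRows_mul, fromRows_mul_fromCols, hQMQ, ← fromBlocks_one]
    congr 1
    · ext i j
      exact congrFun hQMq i
    · ext i j
      have : (q ᵥ* M) ⬝ᵥ (fun k => Q k j) = 0 := by
        have h := congrFun hQMq j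
        rw [← hM, ← transpose_mul, mulVec_transpose] at h
        rw [← dotProduct_mulVec]
        exact h
      exact this
    · ext i j
      have : (q ᵥ* M) ⬝ᵥ q = 1 := by rw [← dotProduct_mulVec, hq1]
      have e : (1 : Matrix Unit Unit ℝ) i j = 1 := by simp
      rw [e]
      exact this
  have h2 : W * (Wᵀ * M) = 1 :=
    (mul_eq_one_comm_of_card_eq _ _ _ (by simp)).mp h1
  have h3 : (W * (Wᵀ * M)) *ᵥ x = x := by rw [h2, one_mulVec]
  conv_lhs => rw [← h3]
  rw [hW, transpose_fromCols, fromRows_mul, fromCols_mul_fromRows, add_mulVec, mulVec_mulVec]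
  congr 1
  ext i
  rw [← mulVec_mulVec, ← mulVec_mulVec]
  simp [mulVec, dotProduct, mul_comm]

/-- Under λ₁ ≤ ρ_q < (λ₁+λ₂)/2, B − ρ_q I is symmetric positive definite, and
Y = ψ(X) is the closed ball {y : (y+z)ᵀ(B−ρ_qI)(y+z) ≤ zᵀ(B−ρ_qI)z} with
z = (B−ρ_qI)⁻¹b; in particular Y is convex. -/
theorem stmt_3 (n : ℕ)
    (A M : Matrix (Fin (n+2)) (Fin (n+2)) ℝ)
    (hA : A.PosDef) (hM : M.PosDef)
    (q : Fin (n+2) → ℝ) (Q : Matrix (Fin (n+2)) (Fin (n+1)) ℝ)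
    (hq1 : q ⬝ᵥ (M *ᵥ q) = 1)
    (hQMQ : Qᵀ * M * Q = 1)
    (hQMq : (Qᵀ * M) *ᵥ q = 0)
    (lam : Fin (n+2) → ℝ) (u : Fin (n+2) → Fin (n+2) → ℝ)
    (hlam0 : 0 < lam 0) (hlam01 : lam 0 < lam 1) (hmono : Monotone lam)
    (heig : ∀ i, A *ᵥ u i = lam i • (M *ᵥ u i))
    (horth : ∀ i j, u i ⬝ᵥ (M *ᵥ u j) = if i = j then (1:ℝ) else 0)
    (hqu1 : 0 < q ⬝ᵥ (M *ᵥ u 0))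
    (B : Matrix (Fin (n+1)) (Fin (n+1)) ℝ) (hB : B = Qᵀ * A * Q)
    (b : Fin (n+1) → ℝ) (hb : b = (Qᵀ * A) *ᵥ q)
    (ρq : ℝ) (hρq : ρq = Rq A M q)
    (hρ1 : lam 0 ≤ ρq) (hρ2 : ρq < (lam 0 + lam 1) / 2)
    (z : Fin (n+1) → ℝ)
    (hz : z = (B - ρq • (1 : Matrix (Fin (n+1)) (Fin (n+1)) ℝ))⁻¹ *ᵥ b) :
    (B - ρq • (1 : Matrix (Fin (n+1)) (Fin (n+1)) ℝ)).PosDef ∧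
    psiMap M q Q '' (Xset A M q) =
      {y : Fin (n+1) → ℝ |
        (y + z) ⬝ᵥ ((B - ρq • (1 : Matrix (Fin (n+1)) (Fin (n+1)) ℝ)) *ᵥ (y + z)) ≤
          z ⬝ᵥ ((B - ρq • (1 : Matrix (Fin (n+1)) (Fin (n+1)) ℝ)) *ᵥ z)} ∧
    Convex ℝ (psiMap M q Q '' (Xset A M q)) := by
  have hMs := aux_tr hM
  have hAs := aux_tr hA
  have hρ : ρq = q ⬝ᵥ (A *ᵥ q) := by rw [hρq, Rq, hq1, div_one]
  have hwM : ∀ y, (Q *ᵥ y) ⬝ᵥ (M *ᵥ (Q *ᵥ y)) = y ⬝ᵥ y := fun y => by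
    rw [aux_move, mulVec_mulVec, hQMQ, one_mulVec]
  have hwA : ∀ y, (Q *ᵥ y) ⬝ᵥ (A *ᵥ (Q *ᵥ y)) = y ⬝ᵥ (B *ᵥ y) := fun y => by
    rw [aux_move, mulVec_mulVec, hB]
  have hwq : ∀ y, (Q *ᵥ y) ⬝ᵥ (M *ᵥ q) = 0 := fun y => by
    rw [aux_move, hQMq, dotProduct_zero]
  have hwb : ∀ y, (Q *ᵥ y) ⬝ᵥ (A *ᵥ q) = y ⬝ᵥ b := fun y => by
    rw [aux_move, hb]
  set C := B - ρq • (1 : Matrix (Fin (n+1)) (Fin (n+1)) ℝ) with hCdef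
  have hC : ∀ y, y ⬝ᵥ (C *ᵥ y) = y ⬝ᵥ (B *ᵥ y) - ρq * (y ⬝ᵥ y) := fun y => by
    rw [hCdef, sub_mulVec, smul_mulVec, one_mulVec, dotProduct_sub, dotProduct_smul, smul_eq_mul]
  have hCs : Cᵀ = C := by
    rw [hCdef, hB]
    simp [transpose_mul, hAs, Matrix.mul_assoc]
  have hCpd : C.PosDef := by
    refine PosDef.of_dotProduct_mulVec_pos ?_ ?_
    · rw [IsHermitian, conjTranspose_eq_transpose_of_trivial, hCs]
    · intro y hy
      rw [star_trivial, hC]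
      have hs : 0 < y ⬝ᵥ y := by
        have := dotProduct_star_self_pos_iff.mpr hy
        rwa [star_trivial] at this
      have b1 := aux_bessel hM q (Q *ᵥ y) (u 0) hq1 (by simp [horth]) (hwq y) (by rwa [hwM])
      have b2 := aux_spec A M hMs lam u hmono heig horth (Q *ᵥ y)
      have b3 := aux_spec A M hMs lam u hmono heig horth q
      rw [hwM] at b1 b2
      rw [hwA] at b2
      rw [← hρ, hq1] at b3
      have d : 0 < lam 1 - lam 0 := by linarith
      have c1 := mul_le_mul_of_nonneg_left b1 d.le
      have c2 := mul_le_mul_of_nonneg_left b3 hs.le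
      have c3 := mul_pos hs (sub_pos.mpr hρ2)
      nlinarith
  have hCz : C *ᵥ z = b := by
    rw [hz, mulVec_mulVec, mul_nonsing_inv _ ((isUnit_iff_isUnit_det _).mp hCpd.isUnit), one_mulVec]
  have hball : ∀ y, ((y + z) ⬝ᵥ (C *ᵥ (y + z)) ≤ z ⬝ᵥ (C *ᵥ z) ↔
      Rq A M (Q *ᵥ y + q) ≤ Rq A M q) := by
    intro y
    have hpos : 0 < y ⬝ᵥ y + 1 := by
      have := dotProduct_star_self_nonneg y
      rw [star_trivial] at this
      linarith
    rw [← hρq, Rq, aux_add hMs, aux_add hAs, aux_add hCs, hCz, hwM, hwA, hwq, hwb, ← hρ, hq1,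
      mul_zero, add_zero, div_le_iff₀ hpos, hC]
    constructor <;> intro h <;> linarith
  have hscale : ∀ (t : ℝ) v, t ≠ 0 → Rq A M (t • v) = Rq A M v := by
    intro t v ht
    simp only [Rq, mulVec_smul, dotProduct_smul, smul_dotProduct, smul_eq_mul]
    rw [mul_div_mul_left _ _ ht, mul_div_mul_left _ _ ht]
  have himg : psiMap M q Q '' (Xset A M q) =
      {y : Fin (n+1) → ℝ | (y + z) ⬝ᵥ (C *ᵥ (y + z)) ≤ z ⬝ᵥ (C *ᵥ z)} := by
    ext y
    rw [Set.mem_ofPred_eq, hball]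
    constructor
    · rintro ⟨x, ⟨⟨-, hx2⟩, hx3⟩, rfl⟩
      have e : x = (q ⬝ᵥ (M *ᵥ x)) • (Q *ᵥ (psiMap M q Q x) + q) := by
        rw [psiMap, mulVec_smul, smul_add, smul_smul, mul_inv_cancel₀ hx2.ne', one_smul]
        exact aux_complete M hMs q Q hq1 hQMQ hQMq x
      rw [← hscale _ _ hx2.ne', ← e]
      exact hx3
    · intro hy
      have hvM : (Q *ᵥ y + q) ⬝ᵥ (M *ᵥ (Q *ᵥ y + q)) = y ⬝ᵥ y + 1 := by
        rw [aux_add hMs, hwM, hwq, hq1]; ring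
      have hpos : 0 < y ⬝ᵥ y + 1 := by
        have := dotProduct_star_self_nonneg y
        rw [star_trivial] at this
        linarith
      have hN : 0 < Mnorm M (Q *ᵥ y + q) := by
        rw [Mnorm, hvM]; exact Real.sqrt_pos.mpr hpos
      have hN2 : Mnorm M (Q *ᵥ y + q) ^ 2 = y ⬝ᵥ y + 1 := by
        rw [Mnorm, hvM]; exact Real.sq_sqrt hpos.le
      have hqv : q ⬝ᵥ (M *ᵥ (Q *ᵥ y + q)) = 1 := by
        rw [mulVec_add, dotProduct_add, aux_symm hMs q, hwq, hq1, zero_add]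
      have hQv : (Qᵀ * M) *ᵥ (Q *ᵥ y + q) = y := by
        rw [mulVec_add, mulVec_mulVec, hQMQ, hQMq, one_mulVec, add_zero]
      refine ⟨psiDag M q Q y, ⟨⟨?_, ?_⟩, ?_⟩, ?_⟩
      · rw [psiDag, Mnorm, mulVec_smul, dotProduct_smul, smul_dotProduct, hvM, ← hN2, smul_eq_mul,
          smul_eq_mul, Real.sqrt_eq_one]
        field_simp
      · rw [psiDag, mulVec_smul, dotProduct_smul, hqv, smul_eq_mul, mul_one]
        exact inv_pos.mpr hN
      · rw [psiDag, hscale _ _ (inv_pos.mpr hN).ne']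
        exact hy
      · rw [psiMap, psiDag, mulVec_smul, dotProduct_smul, hqv, mulVec_smul, hQv, smul_smul,
          smul_eq_mul, mul_one, inv_inv, mul_inv_cancel₀ hN.ne', one_smul]
  refine ⟨hCpd, himg, ?_⟩
  rw [himg]
  exact aux_convex hCpd z _
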